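/- arXiv:1504.03257 — 3 statements merged into one kernel-verified Lean document; each statement's English description precedes it below -/
import Mathlib

section
/- Any mechanism φ such that, for every preference profile P, φ(P) assigns probability 1 to the set of matchings that are stable at P, is interim pairwise stable. -/
open scoped ENNReal

namespace Unraveling

variable (M W : Type*) [Fintype M] [DecidableEq M] [Fintype W] [DecidableEq W]

/-- A matching between men `M` and women `W`.  `Sum.inl m` denotes man `m`,
`Sum.inr w` denotes woman `w`; `toFun a = a` means agent `a` is unmatched. -/
structure Matching where
  toFun : M ⊕ W → M ⊕ W
  man_range : ∀ m : M, toFun (Sum.inl m) = Sum.inl m ∨ ∃ w : W, toFun (Sum.inl m) = Sum.inr w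
  woman_range : ∀ w : W, toFun (Sum.inr w) = Sum.inr w ∨ ∃ m : M, toFun (Sum.inr w) = Sum.inl m
  mutual_cond : ∀ (m : M) (w : W), toFun (Sum.inl m) = Sum.inr w ↔ toFun (Sum.inr w) = Sum.inl m

/-- A preference profile: each man has a ranking (a bijection onto `{1,…,|W|+1}`,
encoded as an `Equiv` onto `Fin (|W|+1)`) of the women together with the option
(`none`) of remaining unmatched, and symmetrically for women. -/
structure Profile where
  mpref : M → (Option W ≃ Fin (Fintype.card W + 1))
  wpref : W → (Option M ≃ Fin (Fintype.card M + 1))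

variable {M W}

/-- The partner of man `m` under matching `μ` (`none` if unmatched). -/
def Matching.partnerM (μ : Matching M W) (m : M) : Option W :=
  match μ.toFun (Sum.inl m) with
  | Sum.inl _ => none
  | Sum.inr w => some w

/-- The partner of woman `w` under matching `μ` (`none` if unmatched). -/
def Matching.partnerW (μ : Matching M W) (w : W) : Option M :=
  match μ.toFun (Sum.inr w) with
  | Sum.inr _ => none
  | Sum.inl m => some m

/-- The rank (`1` = most preferred) that man `m` assigns to `o` under profile `P`. -/
def mrank (P : Profile M W) (m : M) (o : Option W) : ℕ := (P.mpref m o : ℕ) + 1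

/-- The rank (`1` = most preferred) that woman `w` assigns to `o` under profile `P`. -/
def wrank (P : Profile M W) (w : W) (o : Option M) : ℕ := (P.wpref w o : ℕ) + 1

/-- The rank that agent `a` assigns to his/her partner under matching `μ`. -/
def prank (P : Profile M W) (μ : Matching M W) : M ⊕ W → ℕ
  | Sum.inl m => mrank P m (μ.partnerM m)
  | Sum.inr w => wrank P w (μ.partnerW w)

/-- The rank that agent `a` assigns to remaining unmatched. -/
def urank (P : Profile M W) : M ⊕ W → ℕ
  | Sum.inl m => mrank P m none
  | Sum.inr w => wrank P w none

/-- Stability of a matching at a profile. -/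
def IsStable (P : Profile M W) (μ : Matching M W) : Prop :=
  (∀ a : M ⊕ W, prank P μ a ≤ urank P a) ∧
  (∀ (m : M) (w : W), mrank P m (some w) < prank P μ (Sum.inl m) →
     prank P μ (Sum.inr w) < wrank P w (some m))

/-- A mechanism maps each preference profile to a probability distribution over matchings. -/
abbrev Mechanism (M W : Type*) [Fintype M] [DecidableEq M] [Fintype W] [DecidableEq W] :=
  Profile M W → PMF (Matching M W)

/-- The probability that `p` assigns to the set `s`. -/
noncomputable def prob {α : Type*} (p : PMF α) (s : Set α) : ℝ≥0∞ :=
  ∑' x, s.indicator (fun y => p y) x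

/-- CDF of the rank that agent `a` assigns to his/her random partner, when the
matching is drawn from `p` and the profile is `P`. -/
noncomputable def cdfAt (P : Profile M W) (p : PMF (Matching M W)) (a : M ⊕ W) (n : ℕ) : ℝ≥0∞ :=
  prob p {μ | prank P μ a ≤ n}

/-- `SD F G` : the rank distribution with CDF `F` strictly first-order
stochastically dominates the one with CDF `G`. -/
def SD (F G : ℕ → ℝ≥0∞) : Prop := (∀ n, G n ≤ F n) ∧ ∃ n, G n < F n

/-- A coalition consisting of at most one man and at most one woman. -/
def IsPairCoalition (A' : Set (M ⊕ W)) : Prop :=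
  {m : M | Sum.inl m ∈ A'}.Subsingleton ∧ {w : W | Sum.inr w ∈ A'}.Subsingleton

/-- Coalition `A'` blocks mechanism `φ` ex-post at profile `P`. -/
def BlocksExPost (A' : Set (M ⊕ W)) (φ : Mechanism M W) (P : Profile M W) : Prop :=
  A'.Nonempty ∧ ∃ φ' : Mechanism M W,
    (∀ a ∈ A', prob (φ' P) {μ | μ.toFun a ∈ A'} = 1) ∧
    (∀ a ∈ A', SD (cdfAt P (φ' P) a) (cdfAt P (φ P) a))

def ExPostStable (φ : Mechanism M W) : Prop :=
  ∀ (P : Profile M W) (A' : Set (M ⊕ W)), ¬ BlocksExPost A' φ P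

def ExPostPairwiseStable (φ : Mechanism M W) : Prop :=
  ∀ (P : Profile M W) (A' : Set (M ⊕ W)), IsPairCoalition A' → ¬ BlocksExPost A' φ P

/-- Ex-ante CDF of the rank of agent `a`'s partner under mechanism `φ`, when
the profile is drawn from prior `ψ`. -/
noncomputable def cdfExAnte (ψ : PMF (Profile M W)) (φ : Mechanism M W) (a : M ⊕ W) (n : ℕ) : ℝ≥0∞ :=
  ∑' P, ψ P * cdfAt P (φ P) a n

/-- Coalition `A'` blocks mechanism `φ` ex-ante at prior `ψ`. -/
def BlocksExAnte (A' : Set (M ⊕ W)) (φ : Mechanism M W) (ψ : PMF (Profile M W)) : Prop :=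
  A'.Nonempty ∧ ∃ φ' : Mechanism M W,
    (∀ a ∈ A', (∑' P, ψ P * prob (φ' P) {μ | μ.toFun a ∈ A'}) = 1) ∧
    (∀ a ∈ A', SD (cdfExAnte ψ φ' a) (cdfExAnte ψ φ a))

def ExAnteStableAt (φ : Mechanism M W) (ψ : PMF (Profile M W)) : Prop :=
  ∀ A' : Set (M ⊕ W), ¬ BlocksExAnte A' φ ψ

def ExAnteStable (φ : Mechanism M W) : Prop := ∀ ψ, ExAnteStableAt φ ψ

def ExAntePairwiseStable (φ : Mechanism M W) : Prop :=
  ∀ (ψ : PMF (Profile M W)) (A' : Set (M ⊕ W)), IsPairCoalition A' → ¬ BlocksExAnte A' φ ψ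

/-- `prefEq P P' a` : profiles `P` and `P'` give agent `a` the same preferences. -/
def prefEq (P P' : Profile M W) : M ⊕ W → Prop
  | Sum.inl m => P.mpref m = P'.mpref m
  | Sum.inr w => P.wpref w = P'.wpref w

/-- The event `Y_a(P̃_a)`: profiles in which `a`'s preferences agree with `Pt`
and every other member of the coalition `A'` has preferences in his/her
acceptance set `R`. -/
def interimEvent (A' : Set (M ⊕ W)) (R : (M ⊕ W) → Set (Profile M W)) (a : M ⊕ W)
    (Pt : Profile M W) : Set (Profile M W) :=
  {P | prefEq P Pt a ∧ ∀ a' ∈ A', a' ≠ a → P ∈ R a'}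

/-- CDF of the rank of `a`'s partner under `φ`, with the profile drawn from `ψ`
conditioned on the event `Y`. -/
noncomputable def cdfCond (ψ : PMF (Profile M W)) (Y : Set (Profile M W)) (φ : Mechanism M W)
    (a : M ⊕ W) (n : ℕ) : ℝ≥0∞ :=
  (∑' P, Y.indicator (fun P' => ψ P' * cdfAt P' (φ P') a n) P) / prob ψ Y

/-- Coalition `A'` blocks mechanism `φ` in the interim at prior `ψ`.  Each `R a`
is the set of profiles in which `a`'s preferences are ones at which `a` agrees to
deviate; it is required to depend only on `a`'s own preferences. -/
def BlocksInterim (A' : Set (M ⊕ W)) (φ : Mechanism M W) (ψ : PMF (Profile M W)) : Prop :=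
  A'.Nonempty ∧ ∃ (φ' : Mechanism M W) (R : (M ⊕ W) → Set (Profile M W)),
    (∀ (a : M ⊕ W) (P P' : Profile M W), prefEq P P' a → (P ∈ R a ↔ P' ∈ R a)) ∧
    (∀ a ∈ A', ∀ P : Profile M W, prob (φ' P) {μ | μ.toFun a ∈ A'} = 1) ∧
    (∀ a ∈ A', ∀ Pt : Profile M W,
      Pt ∈ R a ↔ (0 < prob ψ (interimEvent A' R a Pt) ∧
        SD (cdfCond ψ (interimEvent A' R a Pt) φ' a)
           (cdfCond ψ (interimEvent A' R a Pt) φ a))) ∧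
    0 < prob ψ {P | ∀ a ∈ A', P ∈ R a}

def InterimStableAt (φ : Mechanism M W) (ψ : PMF (Profile M W)) : Prop :=
  ∀ A' : Set (M ⊕ W), ¬ BlocksInterim A' φ ψ

def InterimStable (φ : Mechanism M W) : Prop := ∀ ψ, InterimStableAt φ ψ

def InterimPairwiseStable (φ : Mechanism M W) : Prop :=
  ∀ (ψ : PMF (Profile M W)) (A' : Set (M ⊕ W)), IsPairCoalition A' → ¬ BlocksInterim A' φ ψ

/-- `MRanks P m rw ru` : man `m` assigns rank `rw w` to each woman `w` and
rank `ru` to remaining unmatched. -/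
def MRanks (P : Profile M W) (m : M) (rw : W → ℕ) (ru : ℕ) : Prop :=
  (∀ w, mrank P m (some w) = rw w) ∧ mrank P m none = ru

/-- `WRanks P w rm ru` : woman `w` assigns rank `rm m` to each man `m` and
rank `ru` to remaining unmatched. -/
def WRanks (P : Profile M W) (w : W) (rm : M → ℕ) (ru : ℕ) : Prop :=
  (∀ m, wrank P w (some m) = rm m) ∧ wrank P w none = ru

instance (P : Profile M W) (m : M) (rw : W → ℕ) (ru : ℕ) : Decidable (MRanks P m rw ru) :=
  decidable_of_iff ((∀ w, mrank P m (some w) = rw w) ∧ mrank P m none = ru) Iff.rfl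

instance (P : Profile M W) (w : W) (rm : M → ℕ) (ru : ℕ) : Decidable (WRanks P w rm ru) :=
  decidable_of_iff ((∀ m, wrank P w (some m) = rm m) ∧ wrank P w none = ru) Iff.rfl

/-- The perfect matching induced by a bijection `e : M ≃ W`. -/
def matchingOf (e : M ≃ W) : Matching M W where
  toFun a :=
    match a with
    | Sum.inl m => Sum.inr (e m)
    | Sum.inr w => Sum.inl (e.symm w)
  man_range m := Or.inr ⟨e m, rfl⟩
  woman_range w := Or.inr ⟨e.symm w, rfl⟩
  mutual_cond m w := by
    constructor
    · intro h
      simp only [Sum.inr.injEq] at h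
      simp [← h]
    · intro h
      simp only [Sum.inl.injEq] at h
      simp [← h]

/-- `P'` is the permutation of profile `P` obtained by (`σM`, `σW`):
`P_a(a') = P'_{σ(a)}(σ(a'))` for all agents `a` and all `a'` in the domain of `P_a`. -/
def IsPermutedProfile (σM : Equiv.Perm M) (σW : Equiv.Perm W) (P P' : Profile M W) : Prop :=
  (∀ m w, P'.mpref (σM m) (some (σW w)) = P.mpref m (some w)) ∧
  (∀ m, P'.mpref (σM m) none = P.mpref m none) ∧
  (∀ w m, P'.wpref (σW w) (some (σM m)) = P.wpref w (some m)) ∧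
  (∀ w, P'.wpref (σW w) none = P.wpref w none)

/-- Probability (jointly over the profile drawn from `ψ` and the internal
randomization of `φ`) that agent `a` is assigned a partner of rank exactly `k`. -/
noncomputable def probRankEq (ψ : PMF (Profile M W)) (φ : Mechanism M W) (a : M ⊕ W) (k : ℕ) : ℝ≥0∞ :=
  ∑' P, ψ P * prob (φ P) {μ | prank P μ a = k}

/-- CDF of a distribution on ranks `{1,2,3}` with probabilities `q1`, `q2`, `q3`. -/
def cdf3 (q1 q2 q3 : ℝ) (n : ℕ) : ℝ :=
  (if 1 ≤ n then q1 else 0) + (if 2 ≤ n then q2 else 0) + (if 3 ≤ n then q3 else 0)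

/-- Strict first-order stochastic dominance for real-valued rank CDFs. -/
def SDR (F G : ℕ → ℝ) : Prop := (∀ n, G n ≤ F n) ∧ ∃ n, G n < F n

end Unraveling

namespace Unraveling

variable {M W : Type*} [Fintype M] [DecidableEq M] [Fintype W] [DecidableEq W]

theorem prob_eq_outer {α : Type*} (p : PMF α) (s : Set α) : prob p s = p.toOuterMeasure s := by
  rw [PMF.toOuterMeasure_apply]; rfl

theorem mem_of_prob_one {α : Type*} {p : PMF α} {s : Set α} (h : prob p s = 1) {x : α}
    (hx : p x ≠ 0) : x ∈ s := by
  rw [prob_eq_outer, PMF.toOuterMeasure_apply_eq_one_iff] at h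
  exact h ((PMF.mem_support_iff _ _).2 hx)

theorem prob_mono' {α : Type*} {p : PMF α} {s t : Set α}
    (h : ∀ x, p x ≠ 0 → x ∈ s → x ∈ t) : prob p s ≤ prob p t := by
  rw [prob_eq_outer, prob_eq_outer]
  exact PMF.toOuterMeasure_mono _ fun x hx => h x ((PMF.mem_support_iff _ _).1 hx.2) hx.1

theorem prob_zero_iff {α : Type*} {p : PMF α} {s : Set α} :
    prob p s = 0 ↔ ∀ x, p x ≠ 0 → x ∉ s := by
  rw [prob_eq_outer, PMF.toOuterMeasure_apply_eq_zero_iff, Set.disjoint_left]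
  simp only [PMF.mem_support_iff]

theorem prob_ne_top {α : Type*} (p : PMF α) (s : Set α) : prob p s ≠ ⊤ := by
  have h : prob p s ≤ 1 := by
    rw [← p.tsum_coe]
    exact ENNReal.tsum_le_tsum fun x => Set.indicator_le_self _ _ x
  exact ne_top_of_le_ne_top ENNReal.one_ne_top h

/-- No strict dominance if the deviation is ex post weakly worse. -/
theorem not_SD_of_worse {ψ : PMF (Profile M W)} {Y : Set (Profile M W)} {φ φ' : Mechanism M W}
    {a : M ⊕ W}
    (h : ∀ P ∈ Y, ψ P ≠ 0 → ∀ μ, φ' P μ ≠ 0 → ∀ ν, φ P ν ≠ 0 → prank P ν a ≤ prank P μ a) :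
    ¬ SD (cdfCond ψ Y φ' a) (cdfCond ψ Y φ a) := by
  rintro ⟨-, n, hn⟩
  refine absurd hn (not_lt.2 ?_)
  unfold cdfCond
  refine ENNReal.div_le_div_right (ENNReal.tsum_le_tsum fun P => ?_) _
  by_cases hP : P ∈ Y
  · rw [Set.indicator_of_mem hP, Set.indicator_of_mem hP]
    by_cases h0 : ψ P = 0
    · simp [h0]
    refine mul_le_mul_right ?_ _
    by_cases hc : cdfAt P (φ' P) a n = 0
    · simp [hc]
    have hc' := hc
    unfold cdfAt at hc'
    rw [prob_zero_iff] at hc'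
    push Not at hc'
    obtain ⟨μ, hμ, hμn⟩ := hc'
    have h1 : cdfAt P (φ' P) a n ≤ 1 := by
      rw [← (φ' P).tsum_coe]
      exact ENNReal.tsum_le_tsum fun x => Set.indicator_le_self _ _ x
    have h2 : cdfAt P (φ P) a n = 1 := by
      unfold cdfAt
      rw [prob_eq_outer, PMF.toOuterMeasure_apply_eq_one_iff]
      intro ν hν
      exact (h P hP h0 μ hμ ν ((PMF.mem_support_iff _ _).1 hν)).trans hμn
    rw [h2]; exact h1
  · simp [hP]

/-- Under dominance, the original mechanism never beats a lower bound for the deviation. -/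
theorem lower_of_SD {ψ : PMF (Profile M W)} {Y : Set (Profile M W)} {φ φ' : Mechanism M W}
    {a : M ⊕ W} {k : ℕ} (hSD : SD (cdfCond ψ Y φ' a) (cdfCond ψ Y φ a))
    (h : ∀ P ∈ Y, ∀ μ, φ' P μ ≠ 0 → k ≤ prank P μ a)
    {P : Profile M W} (hP : P ∈ Y) (hψ : ψ P ≠ 0) {ν : Matching M W} (hν : φ P ν ≠ 0) :
    k ≤ prank P ν a := by
  by_contra hlt
  push Not at hlt
  have hz : cdfCond ψ Y φ' a (prank P ν a) = 0 := by
    unfold cdfCond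
    have : (∑' Q, Y.indicator (fun P' => ψ P' * cdfAt P' (φ' P') a (prank P ν a)) Q) = 0 := by
      rw [ENNReal.tsum_eq_zero]
      intro Q
      by_cases hQ : Q ∈ Y
      · rw [Set.indicator_of_mem hQ]
        have : cdfAt Q (φ' Q) a (prank P ν a) = 0 := by
          unfold cdfAt
          rw [prob_zero_iff]
          intro μ hμ hm
          have := h Q hQ μ hμ
          have hm' : prank Q μ a ≤ prank P ν a := hm
          omega
        rw [this, mul_zero]
      · simp [hQ]
    rw [this, ENNReal.zero_div]
  have hz' : cdfCond ψ Y φ a (prank P ν a) = 0 := by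
    have := hSD.1 (prank P ν a)
    rw [hz] at this
    exact le_antisymm this zero_le
  unfold cdfCond at hz'
  rw [ENNReal.div_eq_zero_iff] at hz'
  rcases hz' with hz' | hz'
  · rw [ENNReal.tsum_eq_zero] at hz'
    have h1 := hz' P
    rw [Set.indicator_of_mem hP] at h1
    rcases mul_eq_zero.1 h1 with h1 | h1
    · exact hψ h1
    · unfold cdfAt at h1
      rw [prob_zero_iff] at h1
      exact h1 ν hν (le_refl (prank P ν a))
  · exact prob_ne_top _ _ hz'

theorem prefEq_refl (P : Profile M W) (a : M ⊕ W) : prefEq P P a := by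
  cases a <;> simp [prefEq]

theorem urank_congr {P Q : Profile M W} {a : M ⊕ W} (h : prefEq P Q a) :
    urank P a = urank Q a := by
  cases a <;> simp only [prefEq] at h <;> simp [urank, mrank, wrank, h]

/-- One agent's step. -/
theorem agent_step {A' : Set (M ⊕ W)} {φ φ' : Mechanism M W} {ψ : PMF (Profile M W)}
    {R : (M ⊕ W) → Set (Profile M W)} {a : M ⊕ W} {r : Profile M W → ℕ}
    (hφ : ∀ P : Profile M W, ∀ μ, φ P μ ≠ 0 → IsStable P μ)
    (hr : ∀ P Q, prefEq P Q a → r P = r Q)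
    (hd : ∀ P μ, φ' P μ ≠ 0 → prank P μ a = r P ∨ prank P μ a = urank P a)
    {P : Profile M W} (hP : ∀ b ∈ A', P ∈ R b) (hψ : ψ P ≠ 0)
    (hSD : SD (cdfCond ψ (interimEvent A' R a P) φ' a) (cdfCond ψ (interimEvent A' R a P) φ a)) :
    r P < urank P a ∧ ∀ ν, φ P ν ≠ 0 → r P ≤ prank P ν a := by
  have hlt : r P < urank P a := by
    by_contra hle
    push Not at hle
    refine not_SD_of_worse ?_ hSD
    intro Q hQ _ μ hμ ν hν
    have h1 := hr Q P hQ.1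
    have h2 := urank_congr hQ.1
    have h3 := (hφ Q ν hν).1 a
    have h4 := hd Q μ hμ
    omega
  refine ⟨hlt, fun ν hν => lower_of_SD hSD ?_ (P := P) ?_ hψ hν⟩
  · intro Q hQ μ hμ
    have h1 := hr Q P hQ.1
    have h2 := urank_congr hQ.1
    have h4 := hd Q μ hμ
    omega
  · exact ⟨prefEq_refl _ _, fun b hb _ => hP b hb⟩

/-- Any mechanism that produces a stable matching with certainty
is interim pairwise stable. -/
theorem stableMechanism_interimPairwiseStable (φ : Mechanism M W)
    (hφ : ∀ P : Profile M W, prob (φ P) {μ | IsStable P μ} = 1) :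
    InterimPairwiseStable φ := by
  rintro ψ A' ⟨hAm, hAw⟩ ⟨⟨a0, ha0⟩, φ', R, hRd, hclosed, hR, hpos⟩
  have hst : ∀ P : Profile M W, ∀ μ, φ P μ ≠ 0 → IsStable P μ :=
    fun P μ hμ => mem_of_prob_one (hφ P) hμ
  have hcl : ∀ a ∈ A', ∀ P μ, φ' P μ ≠ 0 → μ.toFun a ∈ A' :=
    fun a ha P μ hμ => mem_of_prob_one (hclosed a ha P) hμ
  have hne := hpos.ne'
  rw [Ne, prob_zero_iff] at hne
  push Not at hne
  obtain ⟨P0, hψ0, hP0⟩ := hne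
  have hP0 : ∀ a ∈ A', P0 ∈ R a := hP0
  by_cases hpair : ∃ m w, Sum.inl m ∈ A' ∧ Sum.inr w ∈ A'
  · obtain ⟨m, w, hm, hw⟩ := hpair
    have hdm : ∀ (P : Profile M W) μ, φ' P μ ≠ 0 → prank P μ (Sum.inl m) = mrank P m (some w) ∨
        prank P μ (Sum.inl m) = urank P (Sum.inl m) := by
      intro P μ hμ
      have h := hcl _ hm P μ hμ
      rcases hμm : μ.toFun (Sum.inl m) with m' | w'
      · right; simp [prank, urank, Matching.partnerM, hμm]
      · left
        rw [hμm] at h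
        have : w' = w := hAw h hw
        simp [prank, Matching.partnerM, hμm, this]
    have hdw : ∀ (P : Profile M W) μ, φ' P μ ≠ 0 → prank P μ (Sum.inr w) = wrank P w (some m) ∨
        prank P μ (Sum.inr w) = urank P (Sum.inr w) := by
      intro P μ hμ
      have h := hcl _ hw P μ hμ
      rcases hμm : μ.toFun (Sum.inr w) with m' | w'
      · left
        rw [hμm] at h
        have : m' = m := hAm h hm
        simp [prank, Matching.partnerW, hμm, this]
      · right; simp [prank, urank, Matching.partnerW, hμm]
    have hrm : ∀ P Q : Profile M W, prefEq P Q (Sum.inl m) →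
        mrank P m (some w) = mrank Q m (some w) := by
      intro P Q h
      simp only [prefEq] at h
      simp [mrank, h]
    have hrw : ∀ P Q : Profile M W, prefEq P Q (Sum.inr w) →
        wrank P w (some m) = wrank Q w (some m) := by
      intro P Q h
      simp only [prefEq] at h
      simp [wrank, h]
    refine not_SD_of_worse ?_ ((hR _ hm P0).1 (hP0 _ hm)).2
    intro Q hQ hψ μ hμ ν hν
    have hQR : ∀ b ∈ A', Q ∈ R b := by
      intro b hb
      by_cases hbm : b = Sum.inl m
      · subst hbm
        exact (hRd _ _ _ hQ.1).2 (hP0 _ hm)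
      · exact hQ.2 b hb hbm
    obtain ⟨h1, h2⟩ := agent_step hst hrm hdm hQR hψ ((hR _ hm Q).1 (hQR _ hm)).2
    obtain ⟨-, h4⟩ := agent_step hst hrw hdw hQR hψ ((hR _ hw Q).1 (hQR _ hw)).2
    have h5 := h2 ν hν
    have h6 := h4 ν hν
    have h7 := (hst Q ν hν).2 m w
    have h8 := hdm Q μ hμ
    by_contra hcon
    have h9 := h7 (by omega)
    omega
  · have hdu : ∀ P μ, φ' P μ ≠ 0 → prank P μ a0 = urank P a0 ∨ prank P μ a0 = urank P a0 := by
      intro P μ hμ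
      left
      have h := hcl _ ha0 P μ hμ
      rcases a0 with m | w
      · rcases hμm : μ.toFun (Sum.inl m) with m' | w'
        · simp [prank, urank, Matching.partnerM, hμm]
        · rw [hμm] at h
          exact absurd ⟨m, w', ha0, h⟩ hpair
      · rcases hμm : μ.toFun (Sum.inr w) with m' | w'
        · rw [hμm] at h
          exact absurd ⟨m', w, h, ha0⟩ hpair
        · simp [prank, urank, Matching.partnerW, hμm]
    have := (agent_step hst (r := fun P => urank P a0) (fun P Q h => urank_congr h) hdu hP0 hψ0
      ((hR _ ha0 P0).1 (hP0 _ ha0)).2).1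
    exact lt_irrefl _ this

end Unraveling
end

section
/- Let |M| = |W| = 3. No mechanism is ex-ante pairwise stable: for every mechanism φ there exist a prior ψ over preference profiles and a coalition consisting of one man and one woman that blocks φ ex-ante at ψ. -/
open scoped ENNReal

namespace Unraveling


section aux

set_option linter.unusedSectionVars false

variable {M W : Type*} [Fintype M] [DecidableEq M] [Fintype W] [DecidableEq W]

lemma prob_le_one' {α : Type*} (p : PMF α) (s : Set α) : prob p s ≤ 1 := by
  have h : ∑' x, s.indicator (fun y => p y) x ≤ ∑' x, p x :=
    ENNReal.tsum_le_tsum fun x => Set.indicator_le_self' (by simp) x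
  rwa [p.tsum_coe] at h

lemma prob_eq_one_iff' {α : Type*} (p : PMF α) (s : Set α) :
    prob p s = 1 ↔ ∀ x, p x ≠ 0 → x ∈ s := by
  have h := p.toOuterMeasure_apply_eq_one_iff (s := s)
  rw [PMF.toOuterMeasure_apply] at h
  exact h

lemma prob_eq_zero' {α : Type*} (p : PMF α) (s : Set α) (h : ∀ x, p x ≠ 0 → x ∉ s) :
    prob p s = 0 := by
  unfold prob
  rw [ENNReal.tsum_eq_zero]
  intro x
  by_cases hx : x ∈ s
  · rw [Set.indicator_of_mem hx]
    by_contra h0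
    exact h x h0 hx
  · exact Set.indicator_of_notMem hx _

/-- The fair mixture of two profiles. -/
noncomputable def half {α : Type*} (a b : α) : PMF α :=
  ⟨fun x => 2⁻¹ * PMF.pure a x + 2⁻¹ * PMF.pure b x, by
    have h : ∑' x, (2⁻¹ * PMF.pure a x + 2⁻¹ * PMF.pure b x) = (1 : ENNReal) := by
      rw [ENNReal.tsum_add, ENNReal.tsum_mul_left, ENNReal.tsum_mul_left, PMF.tsum_coe,
        PMF.tsum_coe, mul_one, ENNReal.inv_two_add_inv_two]
    rw [← h]
    exact ENNReal.summable.hasSum⟩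

lemma tsum_pure {α : Type*} (a : α) (g : α → ENNReal) :
    ∑' x, PMF.pure a x * g x = g a := by
  classical
  rw [tsum_eq_single a]
  · simp
  · intro b hb
    simp [PMF.pure_apply, hb]

lemma tsum_half {α : Type*} (a b : α) (g : α → ENNReal) :
    ∑' x, half a b x * g x = 2⁻¹ * g a + 2⁻¹ * g b := by
  have h : ∀ x, half a b x * g x
      = 2⁻¹ * (PMF.pure a x * g x) + 2⁻¹ * (PMF.pure b x * g x) := by
    intro x
    change (2⁻¹ * PMF.pure a x + 2⁻¹ * PMF.pure b x) * g x = _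
    ring
  simp_rw [h]
  rw [ENNReal.tsum_add, ENNReal.tsum_mul_left, ENNReal.tsum_mul_left, tsum_pure, tsum_pure]

lemma cdfAt_pure (P : Profile M W) (μ : Matching M W) (a : M ⊕ W) (n : ℕ) :
    cdfAt P (PMF.pure μ) a n = if prank P μ a ≤ n then 1 else 0 := by
  split_ifs with h
  · refine (prob_eq_one_iff' _ _).2 ?_
    intro x hx
    have : x = μ := by simpa [PMF.pure_apply] using hx
    subst this; exact h
  · refine prob_eq_zero' _ _ ?_
    intro x hx
    have : x = μ := by simpa [PMF.pure_apply] using hx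
    subst this; exact h

lemma cdfAt_le (P : Profile M W) (p : PMF (Matching M W)) (a : M ⊕ W) (k n : ℕ)
    (h : ∀ μ, p μ ≠ 0 → k ≤ prank P μ a) : cdfAt P p a n ≤ if k ≤ n then 1 else 0 := by
  split_ifs with hk
  · exact prob_le_one' _ _
  · refine (prob_eq_zero' _ _ ?_).le
    intro x hx hx'
    exact hk ((h x hx).trans hx')

lemma prank_pos (P : Profile M W) (μ : Matching M W) (a : M ⊕ W) : 1 ≤ prank P μ a := by
  cases a <;> simp [prank, mrank, wrank]

/-- Sufficient condition for blocking. -/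
lemma blocks_half (φ : Mechanism M W) (P₁ P₂ : Profile M W) (e : M ≃ W) (m : M) (w : W)
    (hmw : e m = w)
    (h : ∀ a ∈ ({Sum.inl m, Sum.inr w} : Set (M ⊕ W)),
      SD (fun n => 2⁻¹ * (if prank P₁ (matchingOf e) a ≤ n then 1 else 0)
            + 2⁻¹ * (if prank P₂ (matchingOf e) a ≤ n then 1 else 0))
         (fun n => 2⁻¹ * cdfAt P₁ (φ P₁) a n + 2⁻¹ * cdfAt P₂ (φ P₂) a n)) :
    BlocksExAnte {Sum.inl m, Sum.inr w} φ (half P₁ P₂) := by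
  refine ⟨⟨Sum.inl m, by simp⟩, fun _ => PMF.pure (matchingOf e), ?_, ?_⟩
  · intro a ha
    have h1 : prob (PMF.pure (matchingOf e))
        {μ | μ.toFun a ∈ ({Sum.inl m, Sum.inr w} : Set (M ⊕ W))} = 1 := by
      refine (prob_eq_one_iff' _ _).2 ?_
      intro x hx
      have : x = matchingOf e := by simpa [PMF.pure_apply] using hx
      subst this
      rcases ha with rfl | rfl
      · simp [matchingOf, hmw]
      · simp [matchingOf, ← hmw]
    rw [tsum_half, h1, mul_one, ENNReal.inv_two_add_inv_two]
  · intro a ha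
    have := h a ha
    unfold cdfExAnte
    simp_rw [tsum_half, cdfAt_pure]
    exact this

lemma partnerM_eq (μ : Matching M W) (m : M) (w : W) :
    μ.partnerM m = some w ↔ μ.toFun (Sum.inl m) = Sum.inr w := by
  unfold Matching.partnerM
  cases h : μ.toFun (Sum.inl m) <;> simp

lemma partnerW_eq (μ : Matching M W) (m : M) (w : W) :
    μ.partnerW w = some m ↔ μ.toFun (Sum.inl m) = Sum.inr w := by
  rw [μ.mutual_cond]
  unfold Matching.partnerW
  cases h : μ.toFun (Sum.inr w) <;> simp

lemma partnerM_matchingOf (e : M ≃ W) (m : M) : (matchingOf e).partnerM m = some (e m) := rfl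

lemma partnerW_matchingOf (e : M ≃ W) (w : W) :
    (matchingOf e).partnerW w = some (e.symm w) := rfl

/-- If two agents rank each other first, they are matched almost surely or block. -/
lemma mutual_first (φ : Mechanism M W)
    (hφ : ¬ ∃ (ψ : PMF (Profile M W)) (m : M) (w : W), BlocksExAnte {Sum.inl m, Sum.inr w} φ ψ)
    (P : Profile M W) (e : M ≃ W) (m : M) (w : W) (hmw : e m = w)
    (hm : mrank P m (some w) = 1) (hw : wrank P w (some m) = 1)
    (μ : Matching M W) (hμ : φ P μ ≠ 0) : μ.toFun (Sum.inl m) = Sum.inr w := by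
  by_contra hne
  apply hφ
  refine ⟨half P P, m, w, blocks_half φ P P e m w hmw ?_⟩
  intro a ha
  have h1 : prank P (matchingOf e) a = 1 := by
    rcases ha with rfl | rfl
    · simpa [prank, partnerM_matchingOf, hmw] using hm
    · simpa [prank, partnerW_matchingOf, ← hmw] using hw
  have h2 : ¬ prank P μ a ≤ 1 := by
    rcases ha with rfl | rfl
    · intro hle
      apply hne
      rw [← partnerM_eq]
      apply (P.mpref m).injective
      apply Fin.ext
      simp only [prank, mrank] at hle hm ⊢
      omega
    · intro hle
      apply hne
      rw [← partnerW_eq]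
      apply (P.wpref w).injective
      apply Fin.ext
      simp only [prank, wrank] at hle hw ⊢
      omega
  have hx : ∀ x : ENNReal, 2⁻¹ * x + 2⁻¹ * x = x := by
    intro x
    rw [← add_mul, ENNReal.inv_two_add_inv_two, one_mul]
  simp only [h1, hx]
  refine ⟨fun n => cdfAt_le P _ a 1 n fun ν _ => prank_pos P ν a, 1, ?_⟩
  beta_reduce
  rw [if_pos le_rfl]
  refine lt_of_le_of_ne (prob_le_one' _ _) ?_
  intro h
  exact h2 ((prob_eq_one_iff' _ _).1 h μ hμ)

/-- The key dominance computation. -/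
lemma sd_key (F G : ℕ → ENNReal) (hF : ∀ n, F n ≤ if 1 ≤ n then 1 else 0)
    (hG : ∀ n, G n ≤ if 3 ≤ n then 1 else 0) :
    SD (fun n => 2⁻¹ * (if 2 ≤ n then 1 else 0) + 2⁻¹ * (if 1 ≤ n then 1 else 0))
      (fun n => 2⁻¹ * F n + 2⁻¹ * G n) := by
  constructor
  · intro n
    beta_reduce
    rw [add_comm]
    refine add_le_add (mul_le_mul_right ((hG n).trans ?_) _) (mul_le_mul_right (hF n) _)
    split_ifs <;> first | omega | simp
  · refine ⟨2, ?_⟩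
    have h1 := hF 2
    have h2 := hG 2
    norm_num at h1 h2
    simp only [h2]
    norm_num
    rw [ENNReal.inv_two_add_inv_two]
    calc 2⁻¹ * F 2 ≤ 2⁻¹ * 1 := mul_le_mul_right h1 _
      _ < 1 := by rw [mul_one]; exact ENNReal.one_half_lt_one

/-- A ranking with the agents ordered by `g` and remaining unmatched last. -/
lemma exists_pref {X : Type*} [Fintype X] (hX : Fintype.card X = 3) (g : X ≃ Fin 3) :
    ∃ f : Option X ≃ Fin (Fintype.card X + 1),
      (∀ x, (f (some x) : ℕ) = g x) ∧ (f none : ℕ) = 3 := by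
  refine ⟨(g.optionCongr.trans finSuccEquivLast.symm).trans (finCongr (by omega)), ?_, ?_⟩
  · intro x; simp
  · simp

lemma exists_profile (hM : Fintype.card M = 3) (hW : Fintype.card W = 3)
    (eM : M ≃ Fin 3) (eW : W ≃ Fin 3) (σ τ : Fin 3 → Equiv.Perm (Fin 3)) :
    ∃ P : Profile M W,
      (∀ i j, mrank P (eM.symm i) (some (eW.symm j)) = (σ i j : ℕ) + 1) ∧
      (∀ i, mrank P (eM.symm i) none = 4) ∧
      (∀ i j, wrank P (eW.symm j) (some (eM.symm i)) = (τ j i : ℕ) + 1) ∧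
      (∀ j, wrank P (eW.symm j) none = 4) := by
  choose f hf hf' using fun m : M => exists_pref hW (eW.trans (σ (eM m)))
  choose g hg hg' using fun w : W => exists_pref hM (eM.trans (τ (eW w)))
  refine ⟨⟨f, g⟩, ?_, ?_, ?_, ?_⟩
  · intro i j; simp [mrank, hf]
  · intro i; simp [mrank, hf']
  · intro i j; simp [wrank, hg]
  · intro i; simp [wrank, hg']

end aux

/-- With three men and three women, no mechanism is ex-ante
pairwise stable: for every mechanism there are a prior and a coalition of one man
and one woman blocking it ex-ante. -/
theorem no_mechanism_exAntePairwiseStable (M W : Type*)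
    [Fintype M] [DecidableEq M] [Fintype W] [DecidableEq W]
    (hM : Fintype.card M = 3) (hW : Fintype.card W = 3)
    (φ : Mechanism M W) :
    ∃ (ψ : PMF (Profile M W)) (m : M) (w : W),
      BlocksExAnte {Sum.inl m, Sum.inr w} φ ψ := by
  by_contra hφ
  let eM : M ≃ Fin 3 := Fintype.equivFinOfCardEq hM
  let eW : W ≃ Fin 3 := Fintype.equivFinOfCardEq hW
  -- profile 1: m0 : w0 > w1 > w2; m1 : w2 first; w0 : m0 first; w1 : m0 > m1 > m2; w2 : m1 first
  obtain ⟨P, hP1, hP2, hP3, hP4⟩ := exists_profile hM hW eM eW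
    ![1, Equiv.swap 0 2, 1] ![1, 1, Equiv.swap 0 1]
  -- profile 2: m0 : w1 > w2 > w0; m1 : w2 first; m2 : w1 first;
  -- w1 : m2 > m0 > m1; w2 : m1 first
  obtain ⟨Q, hQ1, hQ2, hQ3, hQ4⟩ := exists_profile hM hW eM eW
    ![(finRotate 3).symm, Equiv.swap 0 2, Equiv.swap 0 1] ![1, finRotate 3, Equiv.swap 0 1]
  have mf : ∀ (R : Profile M W) (i j : Fin 3),
      mrank R (eM.symm i) (some (eW.symm j)) = 1 → wrank R (eW.symm j) (some (eM.symm i)) = 1 →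
      ∀ μ : Matching M W, φ R μ ≠ 0 →
        μ.toFun (Sum.inl (eM.symm i)) = Sum.inr (eW.symm j) := by
    intro R i j h1 h2 μ hμ
    exact mutual_first φ hφ R ((eM.trans (Equiv.swap i j)).trans eW.symm) _ _ (by simp) h1 h2 μ hμ
  have hP00 := mf P 0 0 (by rw [hP1]; decide) (by rw [hP3]; decide)
  have hP12 := mf P 1 2 (by rw [hP1]; decide) (by rw [hP3]; decide)
  have hQ21 := mf Q 2 1 (by rw [hQ1]; decide) (by rw [hQ3]; decide)
  have hQ12 := mf Q 1 2 (by rw [hQ1]; decide) (by rw [hQ3]; decide)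
  -- at profile 1, woman 1 gets rank at least 3
  have kP : ∀ μ, φ P μ ≠ 0 → 3 ≤ prank P μ (Sum.inr (eW.symm 1)) := by
    intro μ hμ
    have h0 := hP00 μ hμ
    have h1 := hP12 μ hμ
    change 3 ≤ wrank P (eW.symm 1) (μ.partnerW (eW.symm 1))
    cases h : μ.partnerW (eW.symm 1) with
    | none => rw [hP4]; omega
    | some m =>
      obtain ⟨i, rfl⟩ := eM.symm.surjective m
      rw [partnerW_eq] at h
      rw [hP3]
      fin_cases i
      · exact absurd (h0.symm.trans h) (by simp)
      · exact absurd (h1.symm.trans h) (by simp)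
      · decide
  -- at profile 2, man 0 gets rank at least 3
  have kQ : ∀ μ, φ Q μ ≠ 0 → 3 ≤ prank Q μ (Sum.inl (eM.symm 0)) := by
    intro μ hμ
    have h0 := (μ.mutual_cond _ _).1 (hQ21 μ hμ)
    have h1 := (μ.mutual_cond _ _).1 (hQ12 μ hμ)
    change 3 ≤ mrank Q (eM.symm 0) (μ.partnerM (eM.symm 0))
    cases h : μ.partnerM (eM.symm 0) with
    | none => rw [hQ2]; omega
    | some w =>
      obtain ⟨j, rfl⟩ := eW.symm.surjective w
      rw [partnerM_eq, μ.mutual_cond] at h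
      rw [hQ1]
      fin_cases j
      · decide
      · exact absurd (h0.symm.trans h) (by simp)
      · exact absurd (h1.symm.trans h) (by simp)
  apply hφ
  let e : M ≃ W := (eM.trans (Equiv.swap 0 1)).trans eW.symm
  have he : e (eM.symm 0) = eW.symm 1 := by simp [e]
  have he' : e.symm (eW.symm 1) = eM.symm 0 := by rw [← he]; simp
  refine ⟨half P Q, eM.symm 0, eW.symm 1, blocks_half φ P Q e _ _ he ?_⟩
  intro a ha
  rcases ha with rfl | rfl
  · have r1 : prank P (matchingOf e) (Sum.inl (eM.symm 0)) = 2 := by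
      change mrank P _ ((matchingOf e).partnerM _) = 2
      rw [partnerM_matchingOf, he, hP1]; decide
    have r2 : prank Q (matchingOf e) (Sum.inl (eM.symm 0)) = 1 := by
      change mrank Q _ ((matchingOf e).partnerM _) = 1
      rw [partnerM_matchingOf, he, hQ1]; decide
    rw [r1, r2]
    exact sd_key _ _ (fun n => cdfAt_le _ _ _ 1 n fun ν _ => prank_pos _ _ _)
      (fun n => cdfAt_le _ _ _ 3 n kQ)
  · have r1 : prank P (matchingOf e) (Sum.inr (eW.symm 1)) = 1 := by
      change wrank P _ ((matchingOf e).partnerW _) = 1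
      rw [partnerW_matchingOf, he', hP3]; decide
    have r2 : prank Q (matchingOf e) (Sum.inr (eW.symm 1)) = 2 := by
      change wrank Q _ ((matchingOf e).partnerW _) = 2
      rw [partnerW_matchingOf, he', hQ3]; decide
    rw [r1, r2]
    have := sd_key (cdfAt Q (φ Q) (Sum.inr (eW.symm 1))) (cdfAt P (φ P) (Sum.inr (eW.symm 1)))
      (fun n => cdfAt_le _ _ _ 1 n fun ν _ => prank_pos _ _ _)
      (fun n => cdfAt_le _ _ _ 3 n kP)
    simpa only [add_comm] using this

end Unraveling
end

section
/- Let M = {m1, m2, m3}, W = {w1, w2, w3}, p ∈ (0, 1), and let the prior be: m2 and m3 each rank (w1, w2, w3, unmatched) with certainty; m1 ranks (w1, w2, w3, unmatched) with probability 1−p and (w3, w1, w2, unmatched) with probability p; w2 and w3 each rank (m1, m2, m3, unmatched) with certainty; w1 ranks (m1, m2, m3, unmatched) with probability 1−p and (m3, m1, m2, unmatched) with probability p; the draws for m1 and w1 are independent. Then every profile in the support of this prior has a unique stable matching, and under the mechanism that outputs the unique stable matching, the rank m2 assigns to his partner equals 1 with probability p(1−p), equals 2 with probability (1−p)² + p²,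 and equals 3 with probability p(1−p); the same distribution holds for the rank w2 assigns to her partner. -/
open scoped ENNReal

namespace Unraveling

/-- Ranking `(1,2,3,unmatched)`. -/
def rkA : Option (Fin 3) → Fin (Fintype.card (Fin 3) + 1)
  | none => (3 : Fin 4)
  | some 0 => (0 : Fin 4)
  | some 1 => (1 : Fin 4)
  | some 2 => (2 : Fin 4)

/-- Ranking `(3,1,2,unmatched)`. -/
def rkB : Option (Fin 3) → Fin (Fintype.card (Fin 3) + 1)
  | none => (3 : Fin 4)
  | some 0 => (1 : Fin 4)
  | some 1 => (2 : Fin 4)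
  | some 2 => (0 : Fin 4)

noncomputable def eA : Option (Fin 3) ≃ Fin (Fintype.card (Fin 3) + 1) :=
  Equiv.ofBijective rkA (by decide)

noncomputable def eB : Option (Fin 3) ≃ Fin (Fintype.card (Fin 3) + 1) :=
  Equiv.ofBijective rkB (by decide)

/-- The ranking of the informed agent. -/
def rk (i : Bool) : Option (Fin 3) → Fin (Fintype.card (Fin 3) + 1) :=
  if i then rkB else rkA

noncomputable def prof (i j : Bool) : Profile (Fin 3) (Fin 3) where
  mpref m := if m = 0 then (if i then eB else eA) else eA
  wpref w := if w = 0 then (if j then eB else eA) else eA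

theorem mrank_prof (i j : Bool) (m : Fin 3) (o : Option (Fin 3)) :
    mrank (prof i j) m o = (rk (decide (m = 0) && i) o : ℕ) + 1 := by
  unfold mrank prof rk
  by_cases h : m = 0 <;> cases i <;> simp [h, eA, eB]

theorem wrank_prof (i j : Bool) (m : Fin 3) (o : Option (Fin 3)) :
    wrank (prof i j) m o = (rk (decide (m = 0) && j) o : ℕ) + 1 := by
  unfold wrank prof rk
  by_cases h : m = 0 <;> cases j <;> simp [h, eA, eB]

theorem equiv_of_ranks (e f : Option (Fin 3) ≃ Fin (Fintype.card (Fin 3) + 1))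
    (h : ∀ w, (e (some w) : ℕ) + 1 = (f (some w) : ℕ) + 1)
    (h' : (e none : ℕ) + 1 = (f none : ℕ) + 1) : e = f := by
  ext o
  cases o with
  | none => omega
  | some w => have := h w; omega

theorem ranks_A (w : Fin 3) : (![1, 2, 3] : Fin 3 → ℕ) w = (rkA (some w) : ℕ) + 1 := by
  revert w; decide

theorem ranks_B (w : Fin 3) : (![2, 3, 1] : Fin 3 → ℕ) w = (rkB (some w) : ℕ) + 1 := by
  revert w; decide

theorem mranksA_iff (P : Profile (Fin 3) (Fin 3)) (m : Fin 3) :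
    MRanks P m ![1, 2, 3] 4 ↔ P.mpref m = eA := by
  constructor
  · rintro ⟨h, h'⟩
    exact equiv_of_ranks _ _ (fun w => (h w).trans (ranks_A w)) h'
  · intro h
    refine ⟨fun w => ?_, ?_⟩
    · rw [ranks_A]; simp [mrank, h, eA]
    · simp only [mrank, h]; rfl

theorem mranksB_iff (P : Profile (Fin 3) (Fin 3)) (m : Fin 3) :
    MRanks P m ![2, 3, 1] 4 ↔ P.mpref m = eB := by
  constructor
  · rintro ⟨h, h'⟩
    exact equiv_of_ranks _ _ (fun w => (h w).trans (ranks_B w)) h'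
  · intro h
    refine ⟨fun w => ?_, ?_⟩
    · rw [ranks_B]; simp [mrank, h, eB]
    · simp only [mrank, h]; rfl

theorem wranksA_iff (P : Profile (Fin 3) (Fin 3)) (m : Fin 3) :
    WRanks P m ![1, 2, 3] 4 ↔ P.wpref m = eA := by
  constructor
  · rintro ⟨h, h'⟩
    exact equiv_of_ranks _ _ (fun w => (h w).trans (ranks_A w)) h'
  · intro h
    refine ⟨fun w => ?_, ?_⟩
    · rw [ranks_A]; simp [wrank, h, eA]
    · simp only [wrank, h]; rfl

theorem wranksB_iff (P : Profile (Fin 3) (Fin 3)) (m : Fin 3) :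
    WRanks P m ![2, 3, 1] 4 ↔ P.wpref m = eB := by
  constructor
  · rintro ⟨h, h'⟩
    exact equiv_of_ranks _ _ (fun w => (h w).trans (ranks_B w)) h'
  · intro h
    refine ⟨fun w => ?_, ?_⟩
    · rw [ranks_B]; simp [wrank, h, eB]
    · simp only [wrank, h]; rfl

theorem eA_ne_eB : eA ≠ eB := by
  intro h
  have := DFunLike.congr_fun h (some 0)
  revert this
  change rkA (some 0) ≠ rkB (some 0)
  decide

theorem ite_inj_bool (i i' : Bool)
    (h : (if i then eB else eA) = (if i' then eB else eA)) : i = i' := by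
  cases i <;> cases i'
  · rfl
  · exact absurd h eA_ne_eB
  · exact absurd h eA_ne_eB.symm
  · rfl

theorem prof_injective : Function.Injective (fun x : Bool × Bool => prof x.1 x.2) := by
  rintro ⟨i, j⟩ ⟨i', j'⟩ h
  exact Prod.ext (ite_inj_bool i i' (congrFun (congrArg Profile.mpref h) 0))
    (ite_inj_bool j j' (congrFun (congrArg Profile.wpref h) 0))

theorem eq_prof (P : Profile (Fin 3) (Fin 3)) (i j : Bool)
    (h : P.mpref 1 = eA ∧ P.mpref 2 = eA ∧ P.wpref 1 = eA ∧ P.wpref 2 = eA)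
    (h1 : P.mpref 0 = if i then eB else eA) (h2 : P.wpref 0 = if j then eB else eA) :
    P = prof i j := by
  obtain ⟨ha, hb, hc, hd⟩ := h
  have hm : P.mpref = (prof i j).mpref := by
    funext x
    fin_cases x
    · exact h1
    · exact ha
    · exact hb
  have hw : P.wpref = (prof i j).wpref := by
    funext x
    fin_cases x
    · exact h2
    · exact hc
    · exact hd
  cases P
  simp only at hm hw
  subst hm hw
  rfl

/-- The stable matching, as the men's partners. -/
def st (i j : Bool) : Fin 3 → Fin 3 :=
  match i, j with
  | false, false => ![0, 1, 2]
  | true, false => ![2, 0, 1]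
  | false, true => ![1, 2, 0]
  | true, true => ![2, 1, 0]

/-- The stable matching, as the women's partners. -/
def stInv (i j : Bool) : Fin 3 → Fin 3 :=
  match i, j with
  | false, false => ![0, 1, 2]
  | true, false => ![1, 2, 0]
  | false, true => ![2, 0, 1]
  | true, true => ![2, 1, 0]

def stEquiv (i j : Bool) : Fin 3 ≃ Fin 3 where
  toFun := st i j
  invFun := stInv i j
  left_inv := by revert i j; unfold Function.LeftInverse; decide
  right_inv := by revert i j; unfold Function.RightInverse Function.LeftInverse; decide

theorem partnerM_matchingOf_s14 (i j : Bool) (m : Fin 3) :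
    (matchingOf (stEquiv i j)).partnerM m = some (st i j m) := rfl

theorem partnerW_matchingOf_s14 (i j : Bool) (m : Fin 3) :
    (matchingOf (stEquiv i j)).partnerW m = some (stInv i j m) := rfl

theorem partnerM_eq_some (μ : Matching (Fin 3) (Fin 3)) (m w : Fin 3) :
    μ.partnerM m = some w ↔ μ.toFun (Sum.inl m) = Sum.inr w := by
  unfold Matching.partnerM
  cases h : μ.toFun (Sum.inl m) <;> simp

theorem partnerW_eq_some (μ : Matching (Fin 3) (Fin 3)) (m w : Fin 3) :
    μ.partnerW w = some m ↔ μ.toFun (Sum.inr w) = Sum.inl m := by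
  unfold Matching.partnerW
  cases h : μ.toFun (Sum.inr w) <;> simp

theorem partner_mutual (μ : Matching (Fin 3) (Fin 3)) (m w : Fin 3) :
    μ.partnerM m = some w ↔ μ.partnerW w = some m := by
  rw [partnerM_eq_some, partnerW_eq_some, μ.mutual_cond]

/-- No blocking pair between a man with ranking `r` matched to `a` and a woman with
ranking `s` matched to `b`, together with mutuality. -/
def Ok (i j : Bool) (m w : Fin 3) (a b : Option (Fin 3)) : Prop :=
  (a = some w ↔ b = some m) ∧
  (rk (decide (m = 0) && i) (some w) < rk (decide (m = 0) && i) a →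
    rk (decide (w = 0) && j) b < rk (decide (w = 0) && j) (some m))

instance (i j : Bool) (m w : Fin 3) (a b : Option (Fin 3)) : Decidable (Ok i j m w a b) := by
  unfold Ok; infer_instance

set_option maxRecDepth 100000 in
set_option synthInstance.maxHeartbeats 0 in
set_option synthInstance.maxSize 100000 in
set_option maxHeartbeats 4000000 in
theorem core (i j : Bool) : ∀ a0 b0 : Option (Fin 3), Ok i j 0 0 a0 b0 →
    ∀ a1, Ok i j 1 0 a1 b0 → ∀ a2, Ok i j 2 0 a2 b0 →
    ∀ b1, Ok i j 0 1 a0 b1 → Ok i j 1 1 a1 b1 → Ok i j 2 1 a2 b1 →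
    ∀ b2, Ok i j 0 2 a0 b2 → Ok i j 1 2 a1 b2 → Ok i j 2 2 a2 b2 →
    a0 = some (st i j 0) ∧ a1 = some (st i j 1) ∧ a2 = some (st i j 2) := by
  revert i j
  decide

theorem stable_unique (i j : Bool) (μ : Matching (Fin 3) (Fin 3))
    (h : IsStable (prof i j) μ) : μ = matchingOf (stEquiv i j) := by
  have ok : ∀ m w, Ok i j m w (μ.partnerM m) (μ.partnerW w) := by
    intro m w
    refine ⟨partner_mutual μ m w, fun hlt => ?_⟩
    have := h.2 m w
    simp only [prank, mrank_prof, wrank_prof] at this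
    rw [Fin.lt_def] at hlt ⊢
    have := this (by omega)
    omega
  obtain ⟨h0, h1, h2⟩ := core i j _ _ (ok 0 0) _ (ok 1 0) _ (ok 2 0) _ (ok 0 1) (ok 1 1) (ok 2 1)
    _ (ok 0 2) (ok 1 2) (ok 2 2)
  have hm : ∀ m, μ.toFun (Sum.inl m) = Sum.inr (st i j m) := by
    intro m
    rw [← partnerM_eq_some]
    fin_cases m <;> assumption
  have hf : μ.toFun = (matchingOf (stEquiv i j)).toFun := by
    funext a
    cases a with
    | inl m => exact hm m
    | inr w =>
      change _ = Sum.inl ((stEquiv i j).symm w)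
      rw [← μ.mutual_cond, hm]
      exact congrArg Sum.inr ((stEquiv i j).apply_symm_apply w)
  cases μ
  simp only at hf
  subst hf
  rfl

theorem stable_exists (i j : Bool) : IsStable (prof i j) (matchingOf (stEquiv i j)) := by
  refine ⟨?_, ?_⟩
  · rintro (m | w)
    · simp only [prank, urank, mrank_prof, partnerM_matchingOf_s14]
      revert i j m; decide
    · simp only [prank, urank, wrank_prof, partnerW_matchingOf_s14]
      revert i j w; decide
  · intro m w
    simp only [prank, mrank_prof, wrank_prof, partnerM_matchingOf_s14, partnerW_matchingOf_s14]
    revert i j m w; decide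

theorem prob_pure {α : Type*} (a : α) (s : Set α) [Decidable (a ∈ s)] :
    prob (PMF.pure a) s = if a ∈ s then 1 else 0 := by
  classical
  unfold prob
  rw [tsum_eq_single a]
  · by_cases h : a ∈ s <;> simp [h]
  · intro b hb
    simp [Set.indicator, PMF.pure_apply, hb]

theorem prank_inl (i j : Bool) : prank (prof i j) (matchingOf (stEquiv i j)) (Sum.inl 1) =
    (rk false (some (st i j 1)) : ℕ) + 1 := by
  simp only [prank, mrank_prof, partnerM_matchingOf_s14]; rfl

theorem prank_inr (i j : Bool) : prank (prof i j) (matchingOf (stEquiv i j)) (Sum.inr 1) =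
    (rk false (some (stInv i j 1)) : ℕ) + 1 := by
  simp only [prank, wrank_prof, partnerW_matchingOf_s14]; rfl

theorem ranks_inl : ∀ i j, (rk false (some (st i j 1)) : ℕ) + 1 =
    if i = j then 2 else if i then 1 else 3 := by decide

theorem ranks_inr : ∀ i j, (rk false (some (stInv i j 1)) : ℕ) + 1 =
    if i = j then 2 else if i then 3 else 1 := by decide

/-- In the Appendix A example (with `p ∈ (0,1)`; `m2, m3` rank
`(w1,w2,w3,∅)` and `w2, w3` rank `(m1,m2,m3,∅)` with certainty; `m1` ranks
`(w1,w2,w3,∅)` w.p. `1-p` and `(w3,w1,w2,∅)` w.p. `p`; `w1` ranks `(m1,m2,m3,∅)`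
w.p. `1-p` and `(m3,m1,m2,∅)` w.p. `p`, independently), every profile in the support
has a unique stable matching, and under the mechanism outputting it, `m2` (and
likewise `w2`) gets rank 1 w.p. `p(1-p)`, rank 2 w.p. `(1-p)² + p²`, and rank 3
w.p. `p(1-p)`. -/
theorem appendixA_rank_distribution (p : ℝ≥0∞) (hp0 : 0 < p) (hp1 : p < 1)
    (ψ : PMF (Profile (Fin 3) (Fin 3)))
    (hψ : ∀ P : Profile (Fin 3) (Fin 3),
      ψ P = if MRanks P 1 ![1, 2, 3] 4 ∧ MRanks P 2 ![1, 2, 3] 4 ∧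
              WRanks P 1 ![1, 2, 3] 4 ∧ WRanks P 2 ![1, 2, 3] 4 then
          (if MRanks P 0 ![1, 2, 3] 4 then 1 - p
            else if MRanks P 0 ![2, 3, 1] 4 then p else 0) *
          (if WRanks P 0 ![1, 2, 3] 4 then 1 - p
            else if WRanks P 0 ![2, 3, 1] 4 then p else 0)
        else 0)
    (φ : Mechanism (Fin 3) (Fin 3))
    (hφ : ∀ P : Profile (Fin 3) (Fin 3), 0 < ψ P →
      ∀ μ : Matching (Fin 3) (Fin 3), IsStable P μ → φ P = PMF.pure μ) :
    (∀ P : Profile (Fin 3) (Fin 3), 0 < ψ P → ∃! μ : Matching (Fin 3) (Fin 3), IsStable P μ) ∧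
    (probRankEq ψ φ (Sum.inl 1) 1 = p * (1 - p) ∧
      probRankEq ψ φ (Sum.inl 1) 2 = (1 - p) ^ 2 + p ^ 2 ∧
      probRankEq ψ φ (Sum.inl 1) 3 = p * (1 - p)) ∧
    (probRankEq ψ φ (Sum.inr 1) 1 = p * (1 - p) ∧
      probRankEq ψ φ (Sum.inr 1) 2 = (1 - p) ^ 2 + p ^ 2 ∧
      probRankEq ψ φ (Sum.inr 1) 3 = p * (1 - p)) := by
  have hn := eA_ne_eB
  have hn' := eA_ne_eB.symm
  simp only [mranksA_iff, mranksB_iff, wranksA_iff, wranksB_iff] at hψ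
  have hval : ∀ i j, ψ (prof i j) = (if i then p else 1 - p) * (if j then p else 1 - p) := by
    intro i j
    rw [hψ]
    cases i <;> cases j <;> simp [prof, hn']
  have hsupp : ∀ P, ψ P ≠ 0 → ∃ i j, P = prof i j := by
    intro P hP
    rw [hψ] at hP
    split_ifs at hP with h h1 h2 h2 h1 h2 h2 h2 h2
    all_goals first
      | (exfalso; apply hP; simp; done)
      | skip
    · exact ⟨false, false, eq_prof P _ _ h h1 h2⟩
    · exact ⟨false, true, eq_prof P _ _ h h1 h2⟩
    · exact ⟨true, false, eq_prof P _ _ h h1 h2⟩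
    · exact ⟨true, true, eq_prof P _ _ h h1 h2⟩
  have hpos : ∀ i j, 0 < ψ (prof i j) := by
    intro i j
    rw [hval]
    have : 0 < 1 - p := tsub_pos_of_lt hp1
    cases i <;> cases j <;> simp [hp0.ne', this.ne', pos_iff_ne_zero]
  have hphi : ∀ i j, φ (prof i j) = PMF.pure (matchingOf (stEquiv i j)) := fun i j =>
    hφ _ (hpos i j) _ (stable_exists i j)
  have hsum : ∀ a k, probRankEq ψ φ a k = ∑ i : Bool, ∑ j : Bool,
      ((if i then p else 1 - p) * (if j then p else 1 - p)) *
      (if prank (prof i j) (matchingOf (stEquiv i j)) a = k then 1 else 0) := by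
    intro a k
    unfold probRankEq
    rw [← prof_injective.tsum_eq, tsum_fintype, Fintype.sum_prod_type]
    · refine Finset.sum_congr rfl fun i _ => Finset.sum_congr rfl fun j _ => ?_
      simp only [hval, hphi]
      congr 1
      classical
      rw [prob_pure]
      simp
    · intro P hP
      obtain ⟨i, j, rfl⟩ := hsupp P (fun h => hP (by simp [h]))
      exact ⟨(i, j), rfl⟩
  refine ⟨?_, ?_, ?_⟩
  · intro P hP
    obtain ⟨i, j, rfl⟩ := hsupp P hP.ne'
    exact ⟨_, stable_exists i j, fun μ hμ => stable_unique i j μ hμ⟩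
  · simp only [hsum, prank_inl, ranks_inl]
    refine ⟨?_, ?_, ?_⟩ <;> simp <;> ring
  · simp only [hsum, prank_inr, ranks_inr]
    refine ⟨?_, ?_, ?_⟩ <;> simp <;> ring

end Unraveling
end
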